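/- For every integer n ≥ 0, p(49n+33) ≡ 0 (mod 49). -/

import Mathlib

/-- The partition function `p(n)`: the number of partitions of `n`. -/
def p (n : ℕ) : ℕ := Fintype.card (Nat.Partition n)

open PowerSeries in
/-- The Euler product as an integral power series. -/
noncomputable def eulE : PowerSeries ℤ := pentagonalSeries ℤ

/-- The generating function of the partition numbers. -/
noncomputable def parP : PowerSeries ℤ := PowerSeries.mk fun n => (p n : ℤ)

open PowerSeries PowerSeries.WithPiTopology in
theorem parP_mul_eulE : parP * eulE = 1 := by
  let _ : TopologicalSpace ℤ := ⊥
  have _ : DiscreteTopology ℤ := ⟨rfl⟩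
  have h1 := Nat.Partition.hasProd_powerSeriesMk_card_restricted ℤ (fun _ => True)
  have h2 := hasProd_one_sub_X_pow ℤ
  have h3 := h1.mul h2
  have h4 : (PowerSeries.mk fun n ↦ ((Nat.Partition.restricted n (fun _ => True)).card : ℤ))
      = parP := by
    ext n
    simp [parP, p, Nat.Partition.restricted]
  rw [h4] at h3
  have h5 : (fun i : ℕ => (if True then ∑' j : ℕ, (X : PowerSeries ℤ) ^ ((i + 1) * j) else 1)
      * (1 - X ^ (i + 1))) = fun _ => 1 := by
    funext i
    rw [if_pos trivial]
    simp_rw [pow_mul]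
    rw [tsum_pow_mul_one_sub_of_constantCoeff_eq_zero (by simp)]
  rw [h5] at h3
  exact h3.unique hasProd_one

/-- Finite Euler products. -/
noncomputable def qf (N : ℕ) : PowerSeries ℤ := ∏ i ∈ Finset.range N, (1 - PowerSeries.X ^ (i + 1))

theorem qf_zero : qf 0 = 1 := by simp [qf]

theorem qf_succ (N : ℕ) : qf (N + 1) = qf N * (1 - PowerSeries.X ^ (N + 1)) := by
  simp [qf, Finset.prod_range_succ]

theorem qf_isUnit (N : ℕ) : IsUnit (qf N) := by
  rw [PowerSeries.isUnit_iff_constantCoeff]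
  simp [qf, map_prod]

theorem qf_close (d : ℕ) : ∃ N0, ∀ N, N0 ≤ N → (PowerSeries.X : PowerSeries ℤ) ^ d ∣ eulE - qf N := by
  have h : ∀ n, ∃ N0, ∀ N, N0 ≤ N → (qf N).coeff n = eulE.coeff n := by
    intro n
    have := (Filter.tendsto_finset_range).eventually
      (PowerSeries.coeff_prod_one_sub_X_pow_eventually_eq ℤ n)
    rw [Filter.eventually_atTop] at this
    exact this
  choose f hf using h
  refine ⟨(Finset.range d).sup f, fun N hN => ?_⟩
  rw [PowerSeries.X_pow_dvd_iff]
  intro m hm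
  have : f m ≤ N := le_trans (Finset.le_sup (f := f) (Finset.mem_range.2 hm)) hN
  simp [hf m N this]

/-- The polynomial `(z - 1) ∏ (z - q^i) (1 - z q^i)`. -/
noncomputable def jG : ℕ → Polynomial (PowerSeries ℤ)
  | 0 => Polynomial.X - 1
  | N + 1 => jG N * ((Polynomial.X - Polynomial.C (PowerSeries.X ^ (N + 1))) *
      (1 - Polynomial.C (PowerSeries.X ^ (N + 1)) * Polynomial.X))

theorem jG_func (N : ℕ) :
    (Polynomial.X - Polynomial.C ((PowerSeries.X : PowerSeries ℤ) ^ N)) *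
      (jG N).comp (Polynomial.C PowerSeries.X * Polynomial.X) =
    Polynomial.C (PowerSeries.X ^ N) *
      (Polynomial.C (PowerSeries.X ^ (N + 1)) * Polynomial.X - 1) * jG N := by
  induction N with
  | zero => simp [jG]; ring
  | succ N ih =>
    simp only [jG, Polynomial.mul_comp, Polynomial.sub_comp, Polynomial.X_comp, Polynomial.C_comp,
      Polynomial.one_comp] at ih ⊢
    simp only [map_pow] at ih ⊢
    linear_combination (Polynomial.X - Polynomial.C PowerSeries.X ^ (N + 1)) *
      Polynomial.C PowerSeries.X * (1 - Polynomial.C PowerSeries.X ^ (N + 2) * Polynomial.X) * ih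

theorem jG_rec (N k : ℕ) :
    (jG N).coeff k * ((PowerSeries.X : PowerSeries ℤ) ^ k - PowerSeries.X ^ (2 * N + 1)) =
    PowerSeries.X ^ N * (PowerSeries.X ^ (k + 1) - 1) * (jG N).coeff (k + 1) := by
  have h := congrArg (fun P => Polynomial.coeff P (k + 1)) (jG_func N)
  simp only [sub_mul, mul_assoc, Polynomial.coeff_sub, Polynomial.coeff_X_mul,
    Polynomial.coeff_C_mul, Polynomial.comp_C_mul_X_coeff, mul_sub, one_mul] at h
  linear_combination h

theorem jG_natDegree (N : ℕ) : (jG N).natDegree < 2 * N + 2 := by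
  have : (jG N).natDegree ≤ 2 * N + 1 := by
    induction N with
    | zero => simp only [jG]; compute_degree
    | succ N ih =>
      simp only [jG]
      refine (Polynomial.natDegree_mul_le).trans ?_
      have : ((Polynomial.X - Polynomial.C ((PowerSeries.X : PowerSeries ℤ) ^ (N + 1))) *
        (1 - Polynomial.C (PowerSeries.X ^ (N + 1)) * Polynomial.X)).natDegree ≤ 2 := by
        compute_degree
      omega
  omega

theorem jG_eval (N : ℕ) : (jG N).eval 1 = 0 := by
  induction N with
  | zero => simp [jG]
  | succ N ih => simp [jG, ih]

theorem jG_deriv (N : ℕ) : (Polynomial.derivative (jG N)).eval 1 = qf N ^ 2 := by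
  induction N with
  | zero => simp [jG, qf]
  | succ N ih =>
    rw [jG, Polynomial.derivative_mul, Polynomial.eval_add, Polynomial.eval_mul,
      Polynomial.eval_mul (p := jG N), ih, jG_eval, qf_succ]
    simp
    ring

theorem jG_sum (N : ℕ) : qf N ^ 2 = ∑ k ∈ Finset.range (2 * N + 2), (k : PowerSeries ℤ) * (jG N).coeff k := by
  rw [← jG_deriv, Polynomial.derivative_eval, Polynomial.sum_over_range' _ _ _ (jG_natDegree N)]
  · apply Finset.sum_congr rfl
    intro k _
    simp [mul_comm]
  · simp

/-- Triangular numbers with integral index. -/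
def tri (j : ℤ) : ℕ := (j * (j + 1) / 2).toNat

theorem two_tri (j : ℤ) : 2 * (tri j : ℤ) = j * (j + 1) := by
  have h1 : 2 * (j * (j + 1) / 2) = j * (j + 1) :=
    Int.two_mul_ediv_two_of_even (Int.even_mul_succ_self j)
  have h2 : 0 ≤ j * (j + 1) := by
    rcases le_or_gt 0 j with h | h
    · positivity
    · nlinarith
  unfold tri
  omega

theorem jG_zero (N : ℕ) : (jG N).coeff 0 = (-1) ^ (N + 1) * PowerSeries.X ^ (tri N) := by
  induction N with
  | zero => simp [jG, tri]
  | succ N ih =>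
    have : tri ((N + 1 : ℕ) : ℤ) = tri N + (N + 1) := by
      have h1 := two_tri ((N + 1 : ℕ) : ℤ)
      have h2 := two_tri N
      zify
      push_cast at h1 ⊢
      linarith
    rw [this, jG]
    simp [Polynomial.mul_coeff_zero, ih, -map_pow]
    ring

theorem jG_coeff (N k : ℕ) : ∀ m, k + m = 2 * N + 1 →
    (jG N).coeff k * qf k * qf m =
      (-1) ^ (k + N + 1) * PowerSeries.X ^ (tri ((N : ℤ) - k)) * qf (2 * N + 1) := by
  induction k with
  | zero =>
    intro m hm
    obtain rfl : m = 2 * N + 1 := by omega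
    simp [jG_zero, qf_zero]
  | succ k ih =>
    intro m hm
    have h := ih (m + 1) (by omega)
    have hr := jG_rec N k
    have hX : (PowerSeries.X : PowerSeries ℤ) ^ N ≠ 0 := pow_ne_zero _ PowerSeries.X_ne_zero
    apply mul_left_cancel₀ hX
    have e1 : N + tri ((N : ℤ) - (k + 1 : ℕ)) = k + tri ((N : ℤ) - k) := by
      have h1 := two_tri ((N : ℤ) - (k + 1 : ℕ))
      have h2 := two_tri ((N : ℤ) - k)
      zify
      push_cast at h1 ⊢
      linarith
    have e2 : (PowerSeries.X : PowerSeries ℤ) ^ (2 * N + 1) =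
        PowerSeries.X ^ k * PowerSeries.X ^ (m + 1) := by
      rw [← pow_add]; congr 1; omega
    have e3 : (PowerSeries.X : PowerSeries ℤ) ^ N * PowerSeries.X ^ (tri ((N : ℤ) - (k + 1 : ℕ))) =
        PowerSeries.X ^ k * PowerSeries.X ^ (tri ((N : ℤ) - k)) := by
      rw [← pow_add, ← pow_add, e1]
    rw [e2] at hr
    rw [qf_succ] at h ⊢
    have e4 : (-1 : PowerSeries ℤ) ^ (k + 1 + N + 1) = - (-1) ^ (k + N + 1) := by ring
    rw [e4]
    linear_combination (qf k * qf m) * hr - PowerSeries.X ^ k * h -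
      (- (-1) ^ (k + N + 1)) * qf (2 * N + 1) * e3

theorem jacobi_aux (d K : ℕ) : ∃ N, K ≤ N ∧ (PowerSeries.X : PowerSeries ℤ) ^ d ∣
    eulE ^ 3 - ∑ j ∈ Finset.range (N + 1),
      ((-1) ^ j * (2 * j + 1) : PowerSeries ℤ) * PowerSeries.X ^ (tri j) := by
  obtain ⟨N0, hN0⟩ := qf_close d
  refine ⟨N0 + d + K, by omega, ?_⟩
  set N := N0 + d + K with hN
  rw [← Ideal.mem_span_singleton, ← Ideal.Quotient.eq]
  set π := Ideal.Quotient.mk (Ideal.span {(PowerSeries.X : PowerSeries ℤ) ^ d}) with hπ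
  have hq : ∀ n, N0 ≤ n → π (qf n) = π eulE := by
    intro n hn
    symm
    rw [hπ, Ideal.Quotient.eq, Ideal.mem_span_singleton]
    exact hN0 n hn
  have hX : ∀ n, d ≤ n → π (PowerSeries.X ^ n) = 0 := by
    intro n hn
    rw [hπ, Ideal.Quotient.eq_zero_iff_mem, Ideal.mem_span_singleton]
    exact pow_dvd_pow _ hn
  have hPE : π parP * π eulE = 1 := by rw [← map_mul, parP_mul_eulE, map_one]
  have key : ∀ k, k < 2 * N + 2 → π ((jG N).coeff k) * π eulE =
      π ((-1) ^ (k + N + 1) * PowerSeries.X ^ (tri ((N : ℤ) - k))) := by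
    intro k hk
    have h := congrArg π (jG_coeff N k (2 * N + 1 - k) (by omega))
    simp only [map_mul] at h ⊢
    by_cases hnear : N0 ≤ k ∧ N0 ≤ 2 * N + 1 - k
    · rw [hq _ hnear.1, hq _ hnear.2, hq (2 * N + 1) (by omega)] at h
      linear_combination π parP * h - (π ((jG N).coeff k) * π eulE -
        π ((-1) ^ (k + N + 1)) * π (PowerSeries.X ^ (tri ((N : ℤ) - k)))) * hPE
    · have hd : d ≤ tri ((N : ℤ) - k) := by
        have h2 := two_tri ((N : ℤ) - k)
        have h3 : (d : ℤ) ≤ N - k ∨ (N : ℤ) - k + 1 ≤ - d := by omega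
        zify
        rcases h3 with h3 | h3 <;> nlinarith
      rw [hX _ hd] at h ⊢
      have hu : IsUnit (π (qf k) * π (qf (2 * N + 1 - k))) :=
        ((qf_isUnit _).map π).mul ((qf_isUnit _).map π)
      have : π ((jG N).coeff k) = 0 := by
        rw [← hu.mul_left_eq_zero, ← mul_assoc, h]; ring
      rw [this]; ring
  have hsum : π (eulE ^ 3) = ∑ k ∈ Finset.range (2 * N + 2), (k : _) *
      π ((-1) ^ (k + N + 1) * PowerSeries.X ^ (tri ((N : ℤ) - k))) := by
    have h1 : π (eulE ^ 3) = π (qf N ^ 2) * π eulE := by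
      rw [map_pow, map_pow, hq N (by omega)]; ring
    rw [h1, jG_sum, map_sum, Finset.sum_mul]
    apply Finset.sum_congr rfl
    intro k hk
    rw [← key k (Finset.mem_range.1 hk), map_mul, map_natCast, mul_assoc]
  rw [hsum]
  have h2 : ∑ k ∈ Finset.range (2 * N + 2), (k : PowerSeries ℤ) *
      ((-1) ^ (k + N + 1) * PowerSeries.X ^ (tri ((N : ℤ) - k))) =
      ∑ j ∈ Finset.range (N + 1),
      ((-1) ^ j * (2 * j + 1) : PowerSeries ℤ) * PowerSeries.X ^ (tri j) := by
    rw [show 2 * N + 2 = (N + 1) + (N + 1) by ring, Finset.sum_range_add,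
      ← Finset.sum_range_reflect, ← Finset.sum_add_distrib]
    apply Finset.sum_congr rfl
    intro j hj
    have hj := Finset.mem_range.1 hj
    obtain ⟨i, hi⟩ : ∃ i, N = i + j := ⟨N - j, by omega⟩
    have e1 : N + 1 - 1 - j = i := by omega
    have e2 : tri ((N : ℤ) - i) = tri j := by rw [hi]; push_cast; congr 1; ring
    have e3 : tri ((N : ℤ) - (N + 1 + j : ℕ)) = tri j := by
      have h1 := two_tri ((N : ℤ) - (N + 1 + j : ℕ))
      have h2 := two_tri j
      zify
      push_cast at h1 ⊢
      linarith
    rw [e1, e2, e3]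
    have e4 : (-1 : PowerSeries ℤ) ^ (i + N + 1) = - (-1) ^ j := by
      rw [hi, show i + (i + j) + 1 = 2 * i + j + 1 by ring, pow_succ, pow_add, pow_mul]; simp
    have e5 : (-1 : PowerSeries ℤ) ^ (N + 1 + j + N + 1) = (-1) ^ j := by
      rw [show N + 1 + j + N + 1 = 2 * (N + 1) + j by ring, pow_add, pow_mul]; simp
    rw [e4, e5, hi]
    push_cast
    ring
  rw [← h2, map_sum]
  apply Finset.sum_congr rfl
  intro k _
  rw [map_mul π (k : PowerSeries ℤ), map_natCast]

theorem tri_inj {i j : ℕ} (h : tri i = tri j) : i = j := by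
  have h1 := two_tri i
  have h2 := two_tri j
  rw [h, h2] at h1
  have : ((i : ℤ) - j) * (i + j + 1) = 0 := by linear_combination -h1
  rcases mul_eq_zero.1 this with h | h <;> omega

theorem jacobi_coeff_sum (n K : ℕ) : ∃ N, K ≤ N ∧ (eulE ^ 3).coeff n =
    ∑ j ∈ Finset.range (N + 1), if n = tri j then ((-1) ^ j * (2 * j + 1) : ℤ) else 0 := by
  obtain ⟨N, hN, h⟩ := jacobi_aux (n + 1) K
  refine ⟨N, hN, ?_⟩
  rw [PowerSeries.X_pow_dvd_iff] at h
  have h := h n (by omega)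
  rw [map_sub, sub_eq_zero, map_sum] at h
  rw [h]
  apply Finset.sum_congr rfl
  intro j _
  have : ((-1) ^ j * (2 * j + 1) : PowerSeries ℤ) = PowerSeries.C ((-1) ^ j * (2 * j + 1) : ℤ) := by
    simp
  rw [this, PowerSeries.coeff_C_mul, PowerSeries.coeff_X_pow]
  simp

theorem jacobi_tri (j : ℕ) : (eulE ^ 3).coeff (tri j) = (-1) ^ j * (2 * j + 1) := by
  obtain ⟨N, hN, h⟩ := jacobi_coeff_sum (tri j) j
  rw [h, Finset.sum_eq_single j]
  · simp
  · intro b _ hb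
    rw [if_neg]
    intro h
    exact hb (tri_inj h).symm
  · intro hh
    exact absurd (Finset.mem_range.2 (by omega)) hh

theorem jacobi_not_tri (n : ℕ) (hn : ∀ j : ℕ, n ≠ tri j) : (eulE ^ 3).coeff n = 0 := by
  obtain ⟨N, hN, h⟩ := jacobi_coeff_sum n 0
  rw [h]
  apply Finset.sum_eq_zero
  intro j _
  rw [if_neg (hn j)]

/-- All exponents of `f` are congruent to `r` modulo `7`. -/
def InRes (r : ℕ) (f : PowerSeries ℤ) : Prop := ∀ n, n % 7 ≠ r % 7 → f.coeff n = 0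

theorem InRes.add {r : ℕ} {f g : PowerSeries ℤ} (hf : InRes r f) (hg : InRes r g) :
    InRes r (f + g) := by
  intro n hn
  rw [map_add, hf n hn, hg n hn, add_zero]

theorem InRes.mul {r s : ℕ} {f g : PowerSeries ℤ} (hf : InRes r f) (hg : InRes s g) :
    InRes (r + s) (f * g) := by
  intro n hn
  rw [PowerSeries.coeff_mul]
  apply Finset.sum_eq_zero
  rintro ⟨i, j⟩ hij
  rw [Finset.HasAntidiagonal.mem_antidiagonal] at hij
  dsimp only at hij ⊢
  by_cases hi : i % 7 = r % 7
  · rw [hg j (by omega), mul_zero]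
  · rw [hf i hi, zero_mul]

theorem InRes.intCast (k : ℤ) : InRes 0 (k : PowerSeries ℤ) := by
  intro n hn
  have : (k : PowerSeries ℤ) = PowerSeries.C k := by simp
  rw [this, PowerSeries.coeff_C, if_neg]
  rintro rfl
  exact hn rfl

theorem InRes.pow {r : ℕ} {f : PowerSeries ℤ} (hf : InRes r f) (k : ℕ) :
    InRes (r * k) (f ^ k) := by
  induction k with
  | zero => simpa using InRes.intCast 1
  | succ k ih => rw [pow_succ, mul_add, mul_one]; exact ih.mul hf

/-- The part of `f` with exponents congruent to `r` modulo `7`. -/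
noncomputable def part (r : ℕ) : PowerSeries ℤ →+ PowerSeries ℤ where
  toFun f := PowerSeries.mk fun n => if n % 7 = r % 7 then f.coeff n else 0
  map_zero' := by ext n; simp
  map_add' f g := by
    ext n
    simp only [PowerSeries.coeff_mk, map_add]
    split_ifs <;> simp

theorem coeff_part (r : ℕ) (f : PowerSeries ℤ) (n : ℕ) :
    (part r f).coeff n = if n % 7 = r % 7 then f.coeff n else 0 := by
  simp [part]

theorem part_inRes (r : ℕ) (f : PowerSeries ℤ) : InRes r (part r f) := by
  intro n hn
  rw [coeff_part, if_neg hn]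

theorem InRes.part_eq {r s : ℕ} {f : PowerSeries ℤ} (hf : InRes r f) (h : r % 7 = s % 7) :
    part s f = f := by
  ext n
  rw [coeff_part]
  split_ifs with h1
  · rfl
  · rw [hf n (by omega)]

theorem InRes.part_ne {r s : ℕ} {f : PowerSeries ℤ} (hf : InRes r f) (h : r % 7 ≠ s % 7) :
    part s f = 0 := by
  ext n
  rw [coeff_part]
  split_ifs with h1
  · rw [hf n (by omega)]; simp
  · simp

theorem part_mul {r : ℕ} {f g : PowerSeries ℤ} (hg : InRes 0 g) :
    part r (f * g) = part r f * g := by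
  ext n
  rw [coeff_part, PowerSeries.coeff_mul, PowerSeries.coeff_mul]
  have : ∀ x ∈ Finset.HasAntidiagonal.antidiagonal n, (part r f).coeff x.1 * g.coeff x.2 =
      if n % 7 = r % 7 then f.coeff x.1 * g.coeff x.2 else 0 := by
    rintro ⟨i, j⟩ hij
    rw [Finset.HasAntidiagonal.mem_antidiagonal] at hij
    dsimp only at hij ⊢
    rw [coeff_part]
    by_cases hj : j % 7 = 0
    · have : i % 7 = n % 7 := by omega
      rw [this]
      split_ifs <;> simp
    · rw [hg j hj]
      split_ifs <;> simp
  rw [Finset.sum_congr rfl this]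
  split_ifs <;> simp

theorem part_seven {g0 g1 g2 g3 g4 g5 g6 : PowerSeries ℤ} (h0 : InRes 0 g0) (h1 : InRes 1 g1)
    (h2 : InRes 2 g2) (h3 : InRes 3 g3) (h4 : InRes 4 g4) (h5 : InRes 5 g5) (h6 : InRes 6 g6) :
    part 2 (g0 + g1 + g2 + g3 + g4 + g5 + g6) = g2 ∧
    part 4 (g0 + g1 + g2 + g3 + g4 + g5 + g6) = g4 ∧
    part 5 (g0 + g1 + g2 + g3 + g4 + g5 + g6) = g5 ∧
    part 6 (g0 + g1 + g2 + g3 + g4 + g5 + g6) = g6 := by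
  simp only [map_add]
  refine ⟨?_, ?_, ?_, ?_⟩
  · rw [h0.part_ne (by decide), h1.part_ne (by decide), h2.part_eq (by decide),
      h3.part_ne (by decide), h4.part_ne (by decide), h5.part_ne (by decide),
      h6.part_ne (by decide)]
    simp
  · rw [h0.part_ne (by decide), h1.part_ne (by decide), h2.part_ne (by decide),
      h3.part_ne (by decide), h4.part_eq (by decide), h5.part_ne (by decide),
      h6.part_ne (by decide)]
    simp
  · rw [h0.part_ne (by decide), h1.part_ne (by decide), h2.part_ne (by decide),
      h3.part_ne (by decide), h4.part_ne (by decide), h5.part_eq (by decide),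
      h6.part_ne (by decide)]
    simp
  · rw [h0.part_ne (by decide), h1.part_ne (by decide), h2.part_ne (by decide),
      h3.part_ne (by decide), h4.part_ne (by decide), h5.part_ne (by decide),
      h6.part_eq (by decide)]
    simp

/-- A monomial in four power series. -/
noncomputable def mm (A B C D : PowerSeries ℤ) (k : ℤ) (a b c d : ℕ) : PowerSeries ℤ :=
  (k : PowerSeries ℤ) * A ^ a * B ^ b * C ^ c * D ^ d

theorem mm_inRes {A B C D : PowerSeries ℤ} (hA : InRes 0 A) (hB : InRes 1 B) (hC : InRes 2 C)
    (hD : InRes 5 D) (k : ℤ) (a b c d r : ℕ) (h : (b + 2 * c + 5 * d) % 7 = r % 7) :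
    InRes r (mm A B C D k a b c d) := by
  intro n hn
  have := ((((InRes.intCast k).mul (hA.pow a)).mul (hB.pow b)).mul (hC.pow c)).mul (hD.pow d)
  apply this n
  omega

/-- Residue class 0 part of the cofactor of the norm form. -/
noncomputable def cofM0 (A B C D : PowerSeries ℤ) : PowerSeries ℤ :=
      mm A B C D (1) 6 0 0 0 + mm A B C D (-5) 4 0 1 1 + mm A B C D (4) 3 2 0 1 +
      mm A B C D (-3) 2 1 3 0 + mm A B C D (6) 2 0 2 2 + mm A B C D (4) 1 3 2 0 +
      mm A B C D (-2) 1 2 1 2 + mm A B C D (2) 1 1 0 4 + mm A B C D (-1) 0 5 1 0 +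
      mm A B C D (1) 0 4 0 2 + mm A B C D (2) 0 1 4 1 + mm A B C D (-1) 0 0 3 3

/-- Residue class 1 part of the cofactor of the norm form. -/
noncomputable def cofM1 (A B C D : PowerSeries ℤ) : PowerSeries ℤ :=
      mm A B C D (-1) 5 1 0 0 + mm A B C D (1) 3 1 1 1 + mm A B C D (-1) 3 0 0 3 +
      mm A B C D (-3) 2 3 0 1 + mm A B C D (1) 2 0 4 0 + mm A B C D (-3) 1 2 3 0 +
      mm A B C D (-2) 1 1 2 2 + mm A B C D (2) 1 0 1 4 + mm A B C D (1) 0 4 2 0 +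
      mm A B C D (-3) 0 3 1 2 + mm A B C D (1) 0 2 0 4 + mm A B C D (-1) 0 0 5 1

/-- Residue class 2 part of the cofactor of the norm form. -/
noncomputable def cofM2 (A B C D : PowerSeries ℤ) : PowerSeries ℤ :=
      mm A B C D (-1) 5 0 1 0 + mm A B C D (1) 4 2 0 0 + mm A B C D (4) 3 0 2 1 +
      mm A B C D (-2) 2 2 1 1 + mm A B C D (4) 2 1 0 3 + mm A B C D (2) 1 4 0 1 +
      mm A B C D (2) 1 1 4 0 + mm A B C D (-3) 1 0 3 2 + mm A B C D (-1) 0 3 3 0 +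
      mm A B C D (6) 0 2 2 2 + mm A B C D (-5) 0 1 1 4 + mm A B C D (1) 0 0 0 6

/-- Residue class 3 part of the cofactor of the norm form. -/
noncomputable def cofM3 (A B C D : PowerSeries ℤ) : PowerSeries ℤ :=
      mm A B C D (2) 4 1 1 0 + mm A B C D (1) 4 0 0 2 + mm A B C D (-1) 3 3 0 0 +
      mm A B C D (-2) 2 1 2 1 + mm A B C D (-3) 2 0 1 3 + mm A B C D (1) 1 3 1 1 +
      mm A B C D (-3) 1 2 0 3 + mm A B C D (-1) 1 0 5 0 + mm A B C D (-1) 0 5 0 1 +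
      mm A B C D (1) 0 2 4 0 + mm A B C D (-3) 0 1 3 2 + mm A B C D (1) 0 0 2 4

/-- Residue class 4 part of the cofactor of the norm form. -/
noncomputable def cofM4 (A B C D : PowerSeries ℤ) : PowerSeries ℤ :=
      mm A B C D (1) 4 0 2 0 + mm A B C D (-3) 3 2 1 0 + mm A B C D (-3) 3 1 0 2 +
      mm A B C D (1) 2 4 0 0 + mm A B C D (-3) 2 0 3 1 + mm A B C D (-2) 1 2 2 1 +
      mm A B C D (1) 1 1 1 3 + mm A B C D (-1) 1 0 0 5 + mm A B C D (2) 0 4 1 1 +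
      mm A B C D (-1) 0 3 0 3 + mm A B C D (-1) 0 1 5 0 + mm A B C D (1) 0 0 4 2

/-- Residue class 5 part of the cofactor of the norm form. -/
noncomputable def cofM5 (A B C D : PowerSeries ℤ) : PowerSeries ℤ :=
      mm A B C D (-1) 5 0 0 1 + mm A B C D (-3) 3 1 2 0 + mm A B C D (4) 3 0 1 2 +
      mm A B C D (4) 2 3 1 0 + mm A B C D (-1) 2 2 0 2 + mm A B C D (-1) 1 5 0 0 +
      mm A B C D (8) 1 1 3 1 + mm A B C D (-3) 1 0 2 3 + mm A B C D (-3) 0 3 2 1 +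
      mm A B C D (4) 0 2 1 3 + mm A B C D (-1) 0 1 0 5 + mm A B C D (1) 0 0 6 0

/-- Residue class 6 part of the cofactor of the norm form. -/
noncomputable def cofM6 (A B C D : PowerSeries ℤ) : PowerSeries ℤ :=
      mm A B C D (2) 4 1 0 1 + mm A B C D (-1) 3 0 3 0 + mm A B C D (6) 2 2 2 0 +
      mm A B C D (-2) 2 1 1 2 + mm A B C D (1) 2 0 0 4 + mm A B C D (-5) 1 4 1 0 +
      mm A B C D (4) 1 3 0 2 + mm A B C D (2) 1 0 4 1 + mm A B C D (1) 0 6 0 0 +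
      mm A B C D (-3) 0 2 3 1 + mm A B C D (4) 0 1 2 3 + mm A B C D (-1) 0 0 1 5

/-- The norm form. -/
noncomputable def normN (A B C D : PowerSeries ℤ) : PowerSeries ℤ :=
      mm A B C D (1) 7 0 0 0 + mm A B C D (-7) 5 0 1 1 + mm A B C D (7) 4 2 0 1 +
      mm A B C D (-7) 3 1 3 0 + mm A B C D (14) 3 0 2 2 + mm A B C D (14) 2 3 2 0 +
      mm A B C D (-7) 2 2 1 2 + mm A B C D (7) 2 1 0 4 + mm A B C D (-7) 1 5 1 0 +
      mm A B C D (7) 1 4 0 2 + mm A B C D (14) 1 1 4 1 + mm A B C D (-7) 1 0 3 3 +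
      mm A B C D (1) 0 7 0 0 + mm A B C D (-7) 0 3 3 1 + mm A B C D (14) 0 2 2 3 +
      mm A B C D (-7) 0 1 1 5 + mm A B C D (1) 0 0 7 0 + mm A B C D (1) 0 0 0 7

theorem cof_mul (A B C D : PowerSeries ℤ) :
    (A + B + C + D) * (cofM0 A B C D + cofM1 A B C D + cofM2 A B C D + cofM3 A B C D + cofM4 A B C D + cofM5 A B C D + cofM6 A B C D) =
      normN A B C D := by
  simp only [cofM0, cofM1, cofM2, cofM3, cofM4, cofM5, cofM6, normN, mm]
  push_cast
  ring

theorem part5_identity {A B C D : PowerSeries ℤ} (hA : InRes 0 A) (hB : InRes 1 B)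
    (hC : InRes 2 C) (hD : InRes 5 D) (hE : eulE = A + B + C + D) :
    part 5 parP * normN A B C D = cofM5 A B C D := by
  have hN : InRes 0 (normN A B C D) := by
    unfold normN
    repeat' apply InRes.add
    all_goals exact mm_inRes hA hB hC hD _ _ _ _ _ _ (by decide)
  rw [← part_mul hN, ← cof_mul, ← hE, ← mul_assoc, parP_mul_eulE, one_mul]
  refine (part_seven ?_ ?_ ?_ ?_ ?_ ?_ ?_).2.2.1
  · unfold cofM0
    repeat' apply InRes.add
    all_goals exact mm_inRes hA hB hC hD _ _ _ _ _ _ (by decide)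
  · unfold cofM1
    repeat' apply InRes.add
    all_goals exact mm_inRes hA hB hC hD _ _ _ _ _ _ (by decide)
  · unfold cofM2
    repeat' apply InRes.add
    all_goals exact mm_inRes hA hB hC hD _ _ _ _ _ _ (by decide)
  · unfold cofM3
    repeat' apply InRes.add
    all_goals exact mm_inRes hA hB hC hD _ _ _ _ _ _ (by decide)
  · unfold cofM4
    repeat' apply InRes.add
    all_goals exact mm_inRes hA hB hC hD _ _ _ _ _ _ (by decide)
  · unfold cofM5
    repeat' apply InRes.add
    all_goals exact mm_inRes hA hB hC hD _ _ _ _ _ _ (by decide)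
  · unfold cofM6
    repeat' apply InRes.add
    all_goals exact mm_inRes hA hB hC hD _ _ _ _ _ _ (by decide)

theorem cube_parts {A B C D : PowerSeries ℤ} (hA : InRes 0 A) (hB : InRes 1 B)
    (hC : InRes 2 C) (hD : InRes 5 D) :
    part 2 ((A + B + C + D) ^ 3) = 3 * (A ^ 2 * C + A * B ^ 2 + C ^ 2 * D) ∧
    part 4 ((A + B + C + D) ^ 3) = 3 * (A * C ^ 2 + B ^ 2 * C + B * D ^ 2) ∧
    part 5 ((A + B + C + D) ^ 3) = 3 * (A ^ 2 * D + B * C ^ 2 + C * D ^ 2) ∧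
    part 6 ((A + B + C + D) ^ 3) = 6 * (A * B * D) + C ^ 3 := by
  have e : (A + B + C + D) ^ 3 =
      (mm A B C D 1 3 0 0 0 + mm A B C D 6 1 0 1 1 + mm A B C D 3 0 2 0 1) +
      (mm A B C D 3 2 1 0 0 + mm A B C D 6 0 1 1 1 + mm A B C D 1 0 0 0 3) +
      (mm A B C D 3 2 0 1 0 + mm A B C D 3 1 2 0 0 + mm A B C D 3 0 0 2 1) +
      (mm A B C D 6 1 1 1 0 + mm A B C D 3 1 0 0 2 + mm A B C D 1 0 3 0 0) +
      (mm A B C D 3 1 0 2 0 + mm A B C D 3 0 2 1 0 + mm A B C D 3 0 1 0 2) +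
      (mm A B C D 3 2 0 0 1 + mm A B C D 3 0 1 2 0 + mm A B C D 3 0 0 1 2) +
      (mm A B C D 6 1 1 0 1 + mm A B C D 1 0 0 3 0) := by
    simp only [mm]
    push_cast
    ring
  rw [e]
  obtain ⟨h2, h4, h5, h6⟩ := part_seven
    (g0 := mm A B C D 1 3 0 0 0 + mm A B C D 6 1 0 1 1 + mm A B C D 3 0 2 0 1)
    (g1 := mm A B C D 3 2 1 0 0 + mm A B C D 6 0 1 1 1 + mm A B C D 1 0 0 0 3)
    (g2 := mm A B C D 3 2 0 1 0 + mm A B C D 3 1 2 0 0 + mm A B C D 3 0 0 2 1)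
    (g3 := mm A B C D 6 1 1 1 0 + mm A B C D 3 1 0 0 2 + mm A B C D 1 0 3 0 0)
    (g4 := mm A B C D 3 1 0 2 0 + mm A B C D 3 0 2 1 0 + mm A B C D 3 0 1 0 2)
    (g5 := mm A B C D 3 2 0 0 1 + mm A B C D 3 0 1 2 0 + mm A B C D 3 0 0 1 2)
    (g6 := mm A B C D 6 1 1 0 1 + mm A B C D 1 0 0 3 0)
    (by repeat' apply InRes.add
        all_goals exact mm_inRes hA hB hC hD _ _ _ _ _ _ (by decide))
    (by repeat' apply InRes.add
        all_goals exact mm_inRes hA hB hC hD _ _ _ _ _ _ (by decide))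
    (by repeat' apply InRes.add
        all_goals exact mm_inRes hA hB hC hD _ _ _ _ _ _ (by decide))
    (by repeat' apply InRes.add
        all_goals exact mm_inRes hA hB hC hD _ _ _ _ _ _ (by decide))
    (by repeat' apply InRes.add
        all_goals exact mm_inRes hA hB hC hD _ _ _ _ _ _ (by decide))
    (by repeat' apply InRes.add
        all_goals exact mm_inRes hA hB hC hD _ _ _ _ _ _ (by decide))
    (by repeat' apply InRes.add
        all_goals exact mm_inRes hA hB hC hD _ _ _ _ _ _ (by decide))
  refine ⟨h2.trans ?_, h4.trans ?_, h5.trans ?_, h6.trans ?_⟩ <;>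
  · simp only [mm]
    push_cast
    ring

theorem alg_one {R : Type*} [CommRing R] (A B C D : R) (r6 : A * B * D = C ^ 3)
    (r2 : A ^ 2 * C + A * B ^ 2 + C ^ 2 * D = 0) (r4 : A * C ^ 2 + B ^ 2 * C + B * D ^ 2 = 0)
    (r5 : A ^ 2 * D + B * C ^ 2 + C * D ^ 2 = 0) :
    -A^5*D - 3*A^3*B*C^2 + 4*A^3*C*D^2+4*A^2*B^3*C - A^2*B^2*D^2 - A*B^5 + 8*A*B*C^3*D
      - 3*A*C^2*D^3-3*B^3*C^2*D + 4*B^2*C*D^3 - B*D^5 + C^6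
      = 7*(C*(B^2*D^3+A^2*B^3+A^3*D^2+2*C^5)) := by grind

theorem alg_two {R : Type*} [CommRing R] (A B C D : R) (r6 : A * B * D = C ^ 3)
    (r2 : A ^ 2 * C + A * B ^ 2 + C ^ 2 * D = 0) (r4 : A * C ^ 2 + B ^ 2 * C + B * D ^ 2 = 0)
    (r5 : A ^ 2 * D + B * C ^ 2 + C * D ^ 2 = 0) :
    (B^2*D^3+A^2*B^3+A^3*D^2-5*C^5)^2*C^2 + C^5*(A^7+7*A^4*B^2*D-7*A^5*C*D+14*A^3*C^2*D^2
      -7*A^2*B^2*C*D^2+7*A*B^4*D^2-7*A*B^5*C+14*A^2*B^3*C^2-7*A^3*B*C^3+14*A*B*C^4*D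
      +7*A^2*B*D^4-7*A*C^3*D^3+14*B^2*C^2*D^3+B^7-7*B^3*C^3*D-7*B*C*D^5+C^7+D^7) = 0 := by grind

theorem tri_not (n : ℕ) (hn : n % 7 = 2 ∨ n % 7 = 4 ∨ n % 7 = 5) : (eulE ^ 3).coeff n = 0 := by
  apply jacobi_not_tri
  rintro j rfl
  have h := congrArg (· % 7) (two_tri j)
  have hj : (j : ℤ) % 7 = 0 ∨ (j : ℤ) % 7 = 1 ∨ (j : ℤ) % 7 = 2 ∨ (j : ℤ) % 7 = 3 ∨
    (j : ℤ) % 7 = 4 ∨ (j : ℤ) % 7 = 5 ∨ (j : ℤ) % 7 = 6 := by omega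
  rcases hj with hj | hj | hj | hj | hj | hj | hj <;>
    simp only [Int.mul_emod (j : ℤ), Int.add_emod (j : ℤ), hj] at h <;> norm_num at h <;> omega

theorem tri_six (j : ℕ) (hn : tri j % 7 = 6) : ∃ i : ℕ, j = 7 * i + 3 := by
  have h := congrArg (· % 7) (two_tri j)
  have hj : (j : ℤ) % 7 = 0 ∨ (j : ℤ) % 7 = 1 ∨ (j : ℤ) % 7 = 2 ∨ (j : ℤ) % 7 = 3 ∨
    (j : ℤ) % 7 = 4 ∨ (j : ℤ) % 7 = 5 ∨ (j : ℤ) % 7 = 6 := by omega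
  refine ⟨j / 7, ?_⟩
  rcases hj with hj | hj | hj | hj | hj | hj | hj <;>
    simp only [Int.mul_emod (j : ℤ), Int.add_emod (j : ℤ), hj] at h <;> norm_num at h <;> omega

theorem tri_seven (i : ℕ) : tri ((7 * i + 3 : ℕ) : ℤ) = 49 * tri i + 6 := by
  have h1 := two_tri ((7 * i + 3 : ℕ) : ℤ)
  have h2 := two_tri i
  zify
  push_cast at h1 ⊢
  linarith

theorem part_six_cube : part 6 (eulE ^ 3) =
    - 7 * (PowerSeries.X ^ 6 * PowerSeries.expand 49 (by norm_num) (eulE ^ 3)) := by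
  have h7 : (- 7 : PowerSeries ℤ) = PowerSeries.C (-7) := by simp
  ext n
  rw [coeff_part, h7, PowerSeries.coeff_C_mul, PowerSeries.coeff_X_pow_mul',
    PowerSeries.coeff_expand]
  by_cases hn : n % 7 = 6
  · rw [if_pos hn]
    by_cases ht : ∃ j : ℕ, n = tri j
    · obtain ⟨j, rfl⟩ := ht
      obtain ⟨i, rfl⟩ := tri_six j hn
      rw [jacobi_tri, tri_seven, if_pos (by omega), if_pos (by simp)]
      have : (49 * tri i + 6 - 6) / 49 = tri i := by omega
      rw [this, jacobi_tri, pow_add, pow_mul]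
      push_cast
      norm_num
      ring
    · push Not at ht
      rw [jacobi_not_tri n ht]
      split_ifs with h1 h2
      · rw [jacobi_not_tri]
        · simp
        · intro i hi
          apply ht (7 * i + 3)
          rw [tri_seven]
          omega
      · simp
      · simp
  · rw [if_neg hn]
    split_ifs with h1 h2
    · omega
    · simp
    · simp

theorem pent_mod (k : ℤ) : (pentagonal k % 7 = 0 ∨ pentagonal k % 7 = 1 ∨ pentagonal k % 7 = 5) ∨
    (pentagonal k % 7 = 2 ∧ ∃ i : ℤ, k = 7 * i - 1) := by
  have h := congrArg (· % 7) (two_mul_natCast_pentagonal k)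
  have hj : k % 7 = 0 ∨ k % 7 = 1 ∨ k % 7 = 2 ∨ k % 7 = 3 ∨
    k % 7 = 4 ∨ k % 7 = 5 ∨ k % 7 = 6 := by omega
  have hk : k % 7 = 6 → ∃ i : ℤ, k = 7 * i - 1 := fun h => ⟨(k + 1) / 7, by omega⟩
  rcases hj with hj | hj | hj | hj | hj | hj | hj <;>
    simp only [Int.mul_emod k, Int.sub_emod (3 * k), Int.mul_emod 3 k, hj] at h <;>
    norm_num at h
  all_goals first | (left; omega) | (right; exact ⟨by omega, hk hj⟩)

theorem pent_seven (i : ℤ) : pentagonal (7 * i - 1) = 49 * pentagonal i + 2 := by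
  have h1 := two_mul_natCast_pentagonal (7 * i - 1)
  have h2 := two_mul_natCast_pentagonal i
  zify
  linarith

theorem part_two_eul : part 2 eulE =
    - (PowerSeries.X ^ 2 * PowerSeries.expand 49 (by norm_num) eulE) := by
  ext n
  rw [coeff_part, map_neg, PowerSeries.coeff_X_pow_mul', PowerSeries.coeff_expand]
  by_cases hn : n % 7 = 2
  · rw [if_pos hn]
    by_cases ht : n ∈ Set.range pentagonal
    · obtain ⟨k, rfl⟩ := ht
      obtain ⟨_, i, rfl⟩ : pentagonal k % 7 = 2 ∧ ∃ i : ℤ, k = 7 * i - 1 := by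
        rcases pent_mod k with h | h
        · omega
        · exact h
      rw [eulE, PowerSeries.coeff_pentagonalSeries_pentagonal, pent_seven, if_pos (by omega),
        if_pos (by simp)]
      have : (49 * pentagonal i + 2 - 2) / 49 = pentagonal i := by omega
      rw [this, PowerSeries.coeff_pentagonalSeries_pentagonal]
      rcases Int.even_or_odd i with h | h
      · have h' : Odd (7 * i - 1) := by
          rw [Int.odd_iff]; rw [Int.even_iff] at h; omega
        rw [Int.negOnePow_even _ h, Int.negOnePow_odd _ h']
        simp
      · have h' : Even (7 * i - 1) := by
          rw [Int.even_iff]; rw [Int.odd_iff] at h; omega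
        rw [Int.negOnePow_odd _ h, Int.negOnePow_even _ h']
        simp
    · rw [eulE, PowerSeries.coeff_pentagonalSeries_eq_zero _ ht]
      split_ifs with h1 h2
      · rw [PowerSeries.coeff_pentagonalSeries_eq_zero]
        · simp
        · rintro ⟨i, hi⟩
          apply ht
          refine ⟨7 * i - 1, ?_⟩
          rw [pent_seven]
          omega
      · simp
      · simp
  · rw [if_neg hn]
    split_ifs with h1 h2
    · omega
    · simp
    · simp

theorem eul_split : eulE = part 0 eulE + part 1 eulE + part 2 eulE + part 5 eulE := by
  ext n
  simp only [map_add, coeff_part]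
  by_cases ht : n ∈ Set.range pentagonal
  · obtain ⟨k, rfl⟩ := ht
    rcases pent_mod k with (h | h | h) | ⟨h, _⟩ <;> simp [h]
  · rw [eulE, PowerSeries.coeff_pentagonalSeries_eq_zero _ ht]
    simp

theorem ps_ofNat_ne_zero (k : ℕ) (hk : k ≠ 0) : (k : PowerSeries ℤ) ≠ 0 := by
  intro h
  have h2 := congrArg PowerSeries.constantCoeff h
  rw [map_natCast, map_zero] at h2
  exact hk (by exact_mod_cast h2)

theorem frob7 (f : PowerSeries (ZMod 7)) : PowerSeries.expand 7 (by norm_num) f = f ^ 7 := by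
  have _ : Fact (Nat.Prime 7) := ⟨by norm_num⟩
  have h := MvPowerSeries.map_frobenius_expand (σ := Unit) (R := ZMod 7) 7 (by norm_num) (f := f)
  rw [ZMod.frobenius_zmod, MvPowerSeries.map_id] at h
  exact h

/-- Reduction modulo `7`. -/
noncomputable def red7 : PowerSeries ℤ →+* PowerSeries (ZMod 7) :=
  PowerSeries.map (Int.castRingHom (ZMod 7))

theorem red7_seven : red7 7 = 0 := by
  have : (7 : PowerSeries ℤ) = PowerSeries.C 7 := by simp
  rw [this, red7, PowerSeries.map_C]
  have : (Int.castRingHom (ZMod 7)) 7 = 0 := by decide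
  rw [this, map_zero]

theorem red7_coeff_four (n : ℕ) (hn : n % 7 = 4) : ((red7 eulE) ^ 3).coeff n = 0 := by
  rw [← map_pow, red7, PowerSeries.coeff_map, tri_not n (by omega), map_zero]

theorem target_coeff (n : ℕ) :
    ((PowerSeries.X : PowerSeries (ZMod 7)) ^ 5 * (red7 eulE) ^ 119).coeff (49 * n + 33) = 0 := by
  have e1 : (red7 eulE) ^ 119 = PowerSeries.expand 7 (by norm_num)
      (PowerSeries.expand 7 (by norm_num) ((red7 eulE) ^ 2) * (red7 eulE) ^ 3) := by
    rw [frob7, frob7]; ring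
  rw [e1, PowerSeries.coeff_X_pow_mul', if_pos (by omega),
    show 49 * n + 33 - 5 = 7 * (7 * n + 4) by omega, PowerSeries.coeff_expand_mul,
    PowerSeries.coeff_mul]
  apply Finset.sum_eq_zero
  rintro ⟨i, j⟩ hij
  rw [Finset.HasAntidiagonal.mem_antidiagonal] at hij
  dsimp only at hij ⊢
  by_cases hi : 7 ∣ i
  · rw [red7_coeff_four j (by omega), mul_zero]
  · rw [PowerSeries.coeff_expand_of_not_dvd _ _ _ hi, zero_mul]

theorem dvd_of_red7 (f : PowerSeries ℤ) (h : red7 f = 0) : ∃ g, f = 7 * g := by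
  have h1 : ∀ n, (7 : ℤ) ∣ f.coeff n := by
    intro n
    have := congrArg (PowerSeries.coeff n) h
    rw [red7, PowerSeries.coeff_map, map_zero] at this
    exact (ZMod.intCast_zmod_eq_zero_iff_dvd _ 7).1 this
  choose g hg using h1
  refine ⟨PowerSeries.mk g, ?_⟩
  have : (7 : PowerSeries ℤ) = PowerSeries.C 7 := by simp
  ext n
  rw [this, PowerSeries.coeff_C_mul, PowerSeries.coeff_mk, hg]

theorem main_coeff (n : ℕ) : (49 : ℤ) ∣ parP.coeff (49 * n + 33) := by
  have _ : Fact (Nat.Prime 7) := ⟨by norm_num⟩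
  have h7ne : (7 : PowerSeries ℤ) ≠ 0 := ps_ofNat_ne_zero 7 (by norm_num)
  have h3ne : (3 : PowerSeries ℤ) ≠ 0 := ps_ofNat_ne_zero 3 (by norm_num)
  have h6ne : (6 : PowerSeries ℤ) ≠ 0 := ps_ofNat_ne_zero 6 (by norm_num)
  obtain ⟨A, hAd⟩ : ∃ A, A = part 0 eulE := ⟨_, rfl⟩
  obtain ⟨B, hBd⟩ : ∃ B, B = part 1 eulE := ⟨_, rfl⟩
  obtain ⟨C, hCd⟩ : ∃ C, C = part 2 eulE := ⟨_, rfl⟩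
  obtain ⟨D, hDd⟩ : ∃ D, D = part 5 eulE := ⟨_, rfl⟩
  have hA : InRes 0 A := hAd ▸ part_inRes 0 eulE
  have hB : InRes 1 B := hBd ▸ part_inRes 1 eulE
  have hC : InRes 2 C := hCd ▸ part_inRes 2 eulE
  have hD : InRes 5 D := hDd ▸ part_inRes 5 eulE
  have hE : eulE = A + B + C + D := by
    rw [hAd, hBd, hCd, hDd]; exact eul_split
  have hCx : C = - (PowerSeries.X ^ 2 * PowerSeries.expand 49 (by norm_num) eulE) := by
    rw [hCd, part_two_eul]
  obtain ⟨c2, c4, c5, c6⟩ := cube_parts hA hB hC hD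
  rw [← hE] at c2 c4 c5 c6
  have zero_part : ∀ r, r = 2 ∨ r = 4 ∨ r = 5 → part r (eulE ^ 3) = 0 := by
    intro r hr
    ext m
    rw [coeff_part]
    split_ifs with hm
    · rw [tri_not m (by omega)]; simp
    · simp
  rw [zero_part _ (by simp)] at c2 c4 c5
  have r2 := (mul_eq_zero.1 c2.symm).resolve_left h3ne
  have r4 := (mul_eq_zero.1 c4.symm).resolve_left h3ne
  have r5 := (mul_eq_zero.1 c5.symm).resolve_left h3ne
  have hC3 : C ^ 3 = - (PowerSeries.X ^ 6 * PowerSeries.expand 49 (by norm_num) (eulE ^ 3)) := by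
    rw [hCx, map_pow]; ring
  have r6 : A * B * D = C ^ 3 := by
    rw [part_six_cube] at c6
    apply mul_left_cancel₀ h6ne
    linear_combination -c6 - 7 * hC3
  have a1 := alg_one A B C D r6 r2 r4 r5
  have a2 := alg_two A B C D r6 r2 r4 r5
  have hP := part5_identity hA hB hC hD hE
  obtain ⟨S, hS⟩ : ∃ S, S = C*(B^2*D^3+A^2*B^3+A^3*D^2+2*C^5) := ⟨_, rfl⟩
  have hP' : part 5 parP * normN A B C D = 7 * S := by
    rw [hP, hS, ← a1]
    simp only [cofM5, mm]
    push_cast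
    ring
  have hS2 : (S - 7 * C ^ 6) ^ 2 + C ^ 5 * normN A B C D = 0 := by
    rw [← a2, hS]
    simp only [normN, mm]
    push_cast
    ring
  obtain ⟨e, he⟩ : ∃ e, e = red7 eulE := ⟨_, rfl⟩
  have hN : red7 (normN A B C D) = e ^ 7 := by
    rw [he, hE, ← frob7]
    simp only [map_add, frob7]
    have : normN A B C D = A ^ 7 + B ^ 7 + C ^ 7 + D ^ 7 + 7 * (A^4*B^2*D-A^5*C*D+2*A^3*C^2*D^2
      -A^2*B^2*C*D^2+A*B^4*D^2-A*B^5*C+2*A^2*B^3*C^2-A^3*B*C^3+2*A*B*C^4*D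
      +A^2*B*D^4-A*C^3*D^3+2*B^2*C^2*D^3-B^3*C^3*D-B*C*D^5) := by
      simp only [normN, mm]
      push_cast
      ring
    rw [this, map_add, map_mul, red7_seven, zero_mul, add_zero]
    simp only [map_add, map_pow]
  have hCe : red7 C = - (PowerSeries.X ^ 2 * e ^ 49) := by
    rw [hCx, map_neg, map_mul, map_pow, he]
    have h1 : red7 PowerSeries.X = PowerSeries.X := PowerSeries.map_X _
    have h2 : red7 (PowerSeries.expand 49 (by norm_num) eulE) = (red7 eulE) ^ 49 := by
      rw [red7, PowerSeries.map_expand]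
      have := PowerSeries.expand_mul (R := ZMod 7) 7 (by norm_num) 7 (by norm_num) (red7 eulE)
      rw [frob7, frob7, ← pow_mul] at this
      exact this
    rw [h1, h2]
  have hSe : (red7 S) ^ 2 = (PowerSeries.X ^ 5 * e ^ 126) ^ 2 := by
    have := congrArg red7 hS2
    simp only [map_add, map_mul, map_pow, map_sub, red7_seven, hN, hCe, map_zero] at this
    linear_combination this
  have he0 : e ≠ 0 := by
    intro h0
    have := congrArg red7 parP_mul_eulE
    rw [map_mul, ← he, h0, mul_zero, map_one] at this
    exact zero_ne_one this
  have hP5 : red7 (part 5 parP) = 0 := by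
    have := congrArg red7 hP'
    rw [map_mul, map_mul, red7_seven, zero_mul, hN] at this
    exact (mul_eq_zero.1 this).resolve_right (pow_ne_zero _ he0)
  obtain ⟨T, hT⟩ := dvd_of_red7 _ hP5
  have hTS : T * normN A B C D = S := by
    apply mul_left_cancel₀ h7ne
    rw [← hP', hT]; ring
  have hTe : red7 T * e ^ 7 = red7 S := by rw [← hN, ← map_mul, hTS]
  have hTc : (red7 T).coeff (49 * n + 33) = 0 := by
    have ht := target_coeff n
    rw [← he] at ht
    rcases sq_eq_sq_iff_eq_or_eq_neg.1 hSe with h | h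
    · have : red7 T = PowerSeries.X ^ 5 * e ^ 119 := by
        apply mul_right_cancel₀ (pow_ne_zero 7 he0)
        rw [hTe, h]; ring
      rw [this, ht]
    · have : red7 T = - (PowerSeries.X ^ 5 * e ^ 119) := by
        apply mul_right_cancel₀ (pow_ne_zero 7 he0)
        rw [hTe, h]; ring
      rw [this, map_neg, ht, neg_zero]
  rw [red7, PowerSeries.coeff_map] at hTc
  have hd : (7 : ℤ) ∣ T.coeff (49 * n + 33) := (ZMod.intCast_zmod_eq_zero_iff_dvd _ 7).1 hTc
  have hfin : parP.coeff (49 * n + 33) = 7 * T.coeff (49 * n + 33) := by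
    have h1 := coeff_part 5 parP (49 * n + 33)
    rw [if_pos (by omega), hT] at h1
    have : (7 : PowerSeries ℤ) = PowerSeries.C 7 := by simp
    rw [← h1, this, PowerSeries.coeff_C_mul]
  rw [hfin]
  omega

/-- Ramanujan-type congruence: `p(49n + 33) ≡ 0 (mod 49)` for all `n ≥ 0`. -/
theorem p_49n_add_33_mod_49 (n : ℕ) : p (49 * n + 33) % 49 = 0 := by
  have h := main_coeff n
  rw [parP, PowerSeries.coeff_mk] at h
  omega
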